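/- Let C_0 > 0 and ε > 0. There exist C_1 = C_1(C_0, ε) and n_1 = n_1(C_0, ε) such that for all n ≥ n_1 the following holds: for every centered Gaussian process (G_i)_{i=1}^n with |E[G_i G_j] − min(i,j)| ≤ C_0 for all i, j ≤ n, every real sequence h = (h_i)_{i=1}^{n−1}, and every real t with |t| < n^{1/4}, (1−ε)·p_{B,Y}(n, t, h − (log n)^{3/4}) − C_1·e^{−(log n)^{3/2−ε}} ≤ p_{B,G}(n, t, h) ≤ (1+ε)·p_{B,Y}(n, t, h + (log n)^{3/4}) + C_1·e^{−(log n)^{3/2−ε}}, where h ± c denotes the shifted sequence (h_i ± c)_{i}. -/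

import Mathlib

open MeasureTheory ProbabilityTheory

noncomputable section

/-- The barrier event `B_Z(n,t,h) = {Z_i ≤ h_i, i = 1,…,n−1; Z_n ∈ [t, t+1]}`. -/
def barrierEvent {Ω : Type} (Z : ℕ → Ω → ℝ) (n : ℕ) (t : ℝ) (h : ℕ → ℝ) : Set Ω :=
  {ω | (∀ i, 1 ≤ i → i ≤ n - 1 → Z i ω ≤ h i) ∧ Z n ω ∈ Set.Icc t (t + 1)}

/-- `(G_i)_{i=1,…,n}` is a centered Gaussian process with covariance `Rcov`: every
finite linear combination of values at indices in `{1,…,n}` is a centered Gaussian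
with the prescribed variance. -/
def IsCenteredGaussianCov {Ω : Type} [MeasurableSpace Ω] (P : Measure Ω)
    (G : ℕ → Ω → ℝ) (n : ℕ) (Rcov : ℕ → ℕ → ℝ) : Prop :=
  ∀ (k : ℕ) (idx : Fin k → ℕ) (l : Fin k → ℝ), (∀ a, 1 ≤ idx a ∧ idx a ≤ n) →
    Measure.map (fun ω => ∑ a, l a * G (idx a) ω) P
      = gaussianReal 0 (∑ a, ∑ b, l a * l b * Rcov (idx a) (idx b)).toNNReal

/-!
Given the endpoint `Z_n = s`, a Gaussian process is its regression line on `Z_n` plus a Gaussian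
bridge independent of `Z_n`, so its barrier probability is the integral over `s ∈ [t, t + 1]` of
Gaussian orthant probabilities against the law of `Z_n`. For two processes whose covariances are
within `C` of `min i j`, the bridge covariances differ by `O(C)`, the regression lines by
`O(C |s| / n)`, and the endpoint densities by a factor `1 + o(1)` as long as `t = o(n)`.

Orthant probabilities of bridges with covariances within `c` of each other are compared by Slepian's
inequality, after adding to one vector independent noises and to the other a noise common to all
coordinates. These noises have variance `O(c)`, so undoing them costs a shift `r` of the barrier and
an error `n exp (-r² / O(c))`; the shift `(log n)^{3/4}` makes this `exp (-(log n)^{3/2 - ε})`.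

Slepian's inequality itself is proved by interpolating between the covariance matrices in the
presence of independent noise of variance `δ`, which is finally sent to `0`. A small increase of an
off-diagonal covariance is obtained by replacing part of the independent noises of two coordinates
by a single shared one.
-/

open scoped ENNReal

section GaussianVector

open Complex Matrix WithLp

variable {ι Ω : Type*} [MeasurableSpace Ω] {P : Measure Ω} {X : ι → Ω → ℝ}

/-- The covariance matrix of a family of real random variables. -/
def covarianceMatrix (X : ι → Ω → ℝ) (P : Measure Ω) : Matrix ι ι ℝ :=
  .of fun i j ↦ cov[X i, X j; P]

lemma dotProduct_covarianceMatrix_mulVec [Fintype ι] [IsFiniteMeasure P]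
    (hX : ∀ i, MemLp (X i) 2 P) (x : ι → ℝ) :
    x ⬝ᵥ covarianceMatrix X P *ᵥ x = Var[fun ω ↦ ∑ i, x i * X i ω; P] := by
  have hmul : ∀ i, MemLp (fun ω ↦ x i * X i ω) 2 P := fun i ↦ (hX i).const_mul _
  rw [← covariance_self (memLp_finsetSum _ fun i _ ↦ hmul i).aemeasurable,
    covariance_fun_sum_fun_sum hmul hmul]
  simp only [covariance_const_mul_left, covariance_const_mul_right, dotProduct, mulVec,
    covarianceMatrix, of_apply, Finset.mul_sum]
  exact Finset.sum_congr rfl fun i _ ↦ Finset.sum_congr rfl fun j _ ↦ by ring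

lemma posSemidef_covarianceMatrix [Finite ι] [IsFiniteMeasure P] (hX : ∀ i, MemLp (X i) 2 P) :
    (covarianceMatrix X P).PosSemidef := by
  have := Fintype.ofFinite ι
  exact .of_dotProduct_mulVec_nonneg (by ext i j; exact covariance_comm _ _) fun x ↦ by
    rw [star_trivial, dotProduct_covarianceMatrix_mulVec hX]
    exact variance_nonneg _ _

variable [Fintype ι] [DecidableEq ι]

lemma map_toLp_eq_multivariateGaussian (hX : HasGaussianLaw (fun ω ↦ (X · ω)) P)
    (hmean : ∀ i, P[X i] = 0) :
    P.map (fun ω ↦ toLp 2 (X · ω)) = multivariateGaussian 0 (covarianceMatrix X P) := by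
  have := hX.isProbabilityMeasure
  have hX2 : ∀ i, MemLp (X i) 2 P := fun i ↦ (hX.eval i).memLp_two
  have := (hX.toLp_pi 2).isGaussian_map
  refine Measure.ext_of_charFun (funext fun t ↦ ?_)
  have hinner : (fun ω ↦ inner ℝ t (toLp 2 (X · ω))) = fun ω ↦ ∑ i, t i * X i ω := by
    ext ω
    simp [PiLp.inner_apply, mul_comm]
  have hmean' : P[fun ω ↦ ∑ i, t i * X i ω] = 0 := by
    rw [integral_finsetSum _ fun i _ ↦ ((hX2 i).integrable one_le_two).const_mul _]
    simp [integral_const_mul, hmean]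
  rw [(hX.toLp_pi 2).charFun_map_eq, charFun_multivariateGaussian (posSemidef_covarianceMatrix hX2),
    hinner, hmean', dotProduct_covarianceMatrix_mulVec hX2, inner_zero_right]

lemma multivariateGaussian_conv {S T : Matrix ι ι ℝ} (hS : S.PosSemidef) (hT : T.PosSemidef)
    (μ ν : EuclideanSpace ℝ ι) :
    multivariateGaussian μ S ∗ multivariateGaussian ν T
      = multivariateGaussian (μ + ν) (S + T) := by
  refine Measure.ext_of_charFun (funext fun t ↦ ?_)
  rw [charFun_conv, charFun_multivariateGaussian hS, charFun_multivariateGaussian hT,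
    charFun_multivariateGaussian (hS.add hT), ← exp_add, inner_add_right, add_mulVec,
    dotProduct_add]
  push_cast
  ring_nf

end GaussianVector

section OrthantProb

open Matrix WithLp

variable {ι : Type*}

lemma measurableSet_orthant [Finite ι] (h : ι → ℝ) :
    MeasurableSet {x : EuclideanSpace ℝ ι | ∀ i, x i ≤ h i} := by
  measurability

variable [Fintype ι] [DecidableEq ι] {S T : Matrix ι ι ℝ}

/-- The probability that a centered Gaussian vector with covariance matrix `S` is coordinatewise
at most `h`. If `S` is not positive semidefinite, the vector is `0`. -/
def orthantProb (S : Matrix ι ι ℝ) (h : ι → ℝ) : ℝ≥0∞ :=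
  multivariateGaussian 0 S {x | ∀ i, x i ≤ h i}

lemma orthantProb_le_one (S : Matrix ι ι ℝ) (h : ι → ℝ) : orthantProb S h ≤ 1 := prob_le_one

lemma orthantProb_mono (S : Matrix ι ι ℝ) : Monotone (orthantProb S) :=
  fun _ _ hle ↦ measure_mono fun _ hx i ↦ (hx i).trans (hle i)

lemma measure_forall_le_eq_orthantProb {Ω : Type*} [MeasurableSpace Ω] {P : Measure Ω}
    {X : ι → Ω → ℝ} (hX : HasGaussianLaw (fun ω ↦ (X · ω)) P) (hmean : ∀ i, P[X i] = 0)
    (h : ι → ℝ) :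
    P {ω | ∀ i, X i ω ≤ h i} = orthantProb (covarianceMatrix X P) h := by
  rw [orthantProb, ← map_toLp_eq_multivariateGaussian hX hmean,
    Measure.map_apply_of_aemeasurable (hX.toLp_pi 2).aemeasurable (measurableSet_orthant h)]
  rfl

lemma orthantProb_add (hS : S.PosSemidef) (hT : T.PosSemidef) (h : ι → ℝ) :
    orthantProb (S + T) h = ∫⁻ x, orthantProb S (h - ofLp x) ∂(multivariateGaussian 0 T) := by
  rw [orthantProb, add_comm S, ← add_zero (0 : EuclideanSpace ℝ ι),
    ← multivariateGaussian_conv hT hS, Measure.conv,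
    Measure.map_apply measurable_add (measurableSet_orthant h),
    Measure.prod_apply (measurable_add (measurableSet_orthant h)), add_zero]
  refine lintegral_congr fun x ↦ congrArg _ ?_
  ext y
  simp [le_sub_iff_add_le']

lemma multivariateGaussian_preimage_eval (hS : S.PosSemidef) (i : ι) {s : Set ℝ}
    (hs : MeasurableSet s) :
    multivariateGaussian 0 S ((fun x ↦ x i) ⁻¹' s) = gaussianReal 0 (S i i).toNNReal s :=
  (measurePreserving_eval_multivariateGaussian hS).measure_preimage hs.nullMeasurableSet

lemma orthantProb_le_gaussianReal_Iic (hS : S.PosSemidef) (h : ι → ℝ) (i : ι) :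
    orthantProb S h ≤ gaussianReal 0 (S i i).toNNReal (Set.Iic (h i)) := by
  rw [← multivariateGaussian_preimage_eval hS i measurableSet_Iic]
  exact measure_mono fun x hx ↦ hx i

lemma orthantProb_le_mul_gaussianReal_Iic (hS : S.PosSemidef) {i j : ι} (hij : S i j = 0)
    (h : ι → ℝ) :
    orthantProb S h ≤ gaussianReal 0 (S i i).toNNReal (Set.Iic (h i))
      * gaussianReal 0 (S j j).toNNReal (Set.Iic (h j)) := by
  have hlaw : HasGaussianLaw (fun x : EuclideanSpace ℝ ι ↦ (x i, x j))
      (multivariateGaussian 0 S) :=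
    IsGaussian.hasGaussianLaw_id.map
      ((EuclideanSpace.proj i : _ →L[ℝ] ℝ).prod (EuclideanSpace.proj j))
  have hindep := hlaw.indepFun_of_covariance_eq_zero
    ((covariance_eval_multivariateGaussian hS i j).trans hij)
  rw [← multivariateGaussian_preimage_eval hS i measurableSet_Iic,
    ← multivariateGaussian_preimage_eval hS j measurableSet_Iic,
    ← hindep.measure_inter_preimage_eq_mul _ _ measurableSet_Iic measurableSet_Iic]
  exact measure_mono fun x hx ↦ ⟨hx i, hx j⟩

lemma orthantProb_smul_vecMulVec {d : ℝ} (hd : 0 ≤ d) (v h : ι → ℝ) :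
    orthantProb (d • vecMulVec v v) h = gaussianReal 0 d.toNNReal {s | ∀ i, v i * s ≤ h i} := by
  have hcov : covarianceMatrix (fun i s ↦ v i * s) (gaussianReal 0 d.toNNReal)
      = d • vecMulVec v v := by
    ext i j
    have : cov[fun s ↦ v i * s, fun s ↦ v j * s; gaussianReal 0 d.toNNReal]
        = v i * (v j * Var[fun s ↦ s; gaussianReal 0 d.toNNReal]) := by
      rw [← covariance_self aemeasurable_id', ← covariance_const_mul_right,
        ← covariance_const_mul_left]
    rw [covarianceMatrix, of_apply, this, variance_fun_id_gaussianReal, Real.coe_toNNReal _ hd,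
      Matrix.smul_apply, vecMulVec_apply, smul_eq_mul]
    ring
  rw [← hcov, measure_forall_le_eq_orthantProb]
  · exact IsGaussian.hasGaussianLaw_id.map_fun
      (ContinuousLinearMap.pi fun i ↦ v i • ContinuousLinearMap.id ℝ ℝ)
  · intro i
    rw [integral_const_mul, integral_id_gaussianReal, mul_zero]

end OrthantProb

section PairVector

open Matrix

variable {ι : Type*} [DecidableEq ι]

/-- The vector `e_i + e_j`: the direction of a noise shared by the coordinates `i` and `j`. -/
def pairVector (i j : ι) : ι → ℝ := Pi.single i 1 + Pi.single j 1

lemma pairVector_nonneg (i j : ι) : 0 ≤ pairVector i j :=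
  add_nonneg (Pi.single_nonneg.2 zero_le_one) (Pi.single_nonneg.2 zero_le_one)

lemma pairVector_left {i j : ι} (hij : i ≠ j) : pairVector i j i = 1 := by
  simp [pairVector, hij]

lemma pairVector_right {i j : ι} (hij : i ≠ j) : pairVector i j j = 1 := by
  simp [pairVector, hij.symm]

lemma pairVector_of_ne {i j k : ι} (hi : k ≠ i) (hj : k ≠ j) : pairVector i j k = 0 := by
  simp [pairVector, hi, hj]

lemma vecMulVec_pairVector (i j : ι) :
    vecMulVec (pairVector i j) (pairVector i j)
      = diagonal (pairVector i j) + (single i j 1 + single j i 1) := by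
  have hdiag : diagonal (pairVector i j) = single i i 1 + single j j 1 := by
    rw [← diagonal_single, ← diagonal_single, diagonal_add]
    rfl
  rw [hdiag, pairVector, add_vecMulVec, vecMulVec_add, vecMulVec_add]
  simp only [single_eq_single_vecMulVec_single]
  abel

variable [Fintype ι] {D : Matrix ι ι ℝ}

lemma sum_smul_diagonal_pairVector (hD : D.IsSymm) :
    ∑ q : ι × ι, (D q.1 q.2 / 2) • diagonal (pairVector q.1 q.2)
      = diagonal fun i ↦ ∑ j, D i j := by
  have hcoord : ∀ i, ∑ q : ι × ι, D q.1 q.2 / 2 * pairVector q.1 q.2 i = ∑ j, D i j := fun i ↦ by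
    simp only [Fintype.sum_prod_type, pairVector, Pi.add_apply, mul_add, Finset.sum_add_distrib]
    rw [Finset.sum_comm]
    simp [Pi.single_apply, ← Finset.sum_div, hD.apply]
  ext i j
  rw [Matrix.sum_apply, diagonal_apply, ← hcoord i]
  split_ifs with hij <;> simp [hij]

lemma sum_smul_vecMulVec_pairVector (hD : D.IsSymm) :
    ∑ q : ι × ι, (D q.1 q.2 / 2) • vecMulVec (pairVector q.1 q.2) (pairVector q.1 q.2)
      = (diagonal fun i ↦ ∑ j, D i j) + D := by
  have hpair : ∀ q : ι × ι,
      (D q.1 q.2 / 2) • vecMulVec (pairVector q.1 q.2) (pairVector q.1 q.2)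
        = (D q.1 q.2 / 2) • diagonal (pairVector q.1 q.2)
          + (single q.1 q.2 (D q.1 q.2 / 2) + single q.2 q.1 (D q.2 q.1 / 2)) := fun q ↦ by
    simp [vecMulVec_pairVector, smul_add, smul_single, hD.apply]
  have hsingle : ∑ i, ∑ j, single i j (D i j / 2) = (2⁻¹ : ℝ) • D := by
    rw [matrix_eq_sum_single ((2⁻¹ : ℝ) • D)]
    simp [div_eq_inv_mul]
  simp only [hpair, Finset.sum_add_distrib, sum_smul_diagonal_pairVector hD]
  rw [Fintype.sum_prod_type, Fintype.sum_prod_type_right, hsingle, ← add_smul]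
  norm_num

end PairVector

section Slepian

open Matrix WithLp

variable {ι : Type*} {A B S T : Matrix ι ι ℝ}

lemma posSemidef_add_smul_sub (hA : A.PosSemidef) (hB : B.PosSemidef) {s : ℝ} (hs : 0 ≤ s)
    (hs1 : s ≤ 1) : (A + s • (B - A)).PosSemidef := by
  have hconvex : A + s • (B - A) = (1 - s) • A + s • B := by module
  exact hconvex ▸ (hA.smul (sub_nonneg.2 hs1)).add (hB.smul hs)

variable [Fintype ι] [DecidableEq ι]

lemma orthantProb_diagonal_pairVector_le {d : ℝ} (hd : 0 ≤ d) {i j : ι} (hij : i ≠ j)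
    (h : ι → ℝ) :
    orthantProb (d • diagonal (pairVector i j)) h
      ≤ orthantProb (d • vecMulVec (pairVector i j) (pairVector i j)) h := by
  have hS := (PosSemidef.diagonal (pairVector_nonneg i j)).smul hd
  set γ := gaussianReal 0 d.toNNReal with hγ
  by_cases hnonneg : ∀ k, k ≠ i → k ≠ j → 0 ≤ h k
  · calc orthantProb (d • diagonal (pairVector i j)) h
        ≤ γ (Set.Iic (h i)) * γ (Set.Iic (h j)) := by
          simpa [pairVector_left hij, pairVector_right hij, ← hγ]
            using orthantProb_le_mul_gaussianReal_Iic hS (i := i) (j := j) (by simp [hij]) h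
      _ ≤ γ (Set.Iic (min (h i) (h j))) := by
          rcases le_total (h i) (h j) with hle | hle
          · rw [min_eq_left hle]
            exact mul_le_of_le_one_right' prob_le_one
          · rw [min_eq_right hle]
            exact mul_le_of_le_one_left' prob_le_one
      _ ≤ orthantProb (d • vecMulVec (pairVector i j) (pairVector i j)) h := by
          rw [orthantProb_smul_vecMulVec hd]
          refine measure_mono fun s hs k ↦ ?_
          obtain ⟨hsi, hsj⟩ := le_min_iff.1 (Set.mem_Iic.1 hs)
          rcases eq_or_ne k i with rfl | hki
          · rwa [pairVector_left hij, one_mul]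
          rcases eq_or_ne k j with rfl | hkj
          · rwa [pairVector_right hij, one_mul]
          rw [pairVector_of_ne hki hkj, zero_mul]
          exact hnonneg k hki hkj
  · push Not at hnonneg
    obtain ⟨k, hki, hkj, hk⟩ := hnonneg
    refine (orthantProb_le_gaussianReal_Iic hS h k).trans ?_
    simp [pairVector_of_ne hki hkj, hk]

lemma orthantProb_add_le_add (hB : B.PosSemidef) (hS : S.PosSemidef)
    (hT : T.PosSemidef) (hST : ∀ h, orthantProb S h ≤ orthantProb T h) (h : ι → ℝ) :
    orthantProb (S + B) h ≤ orthantProb (T + B) h := by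
  rw [orthantProb_add hS hB, orthantProb_add hT hB]
  exact lintegral_mono fun x ↦ hST _

lemma orthantProb_add_sum_le {κ : Type*} (s : Finset κ) {S T : κ → Matrix ι ι ℝ}
    (hB : B.PosSemidef) (hS : ∀ q, (S q).PosSemidef) (hT : ∀ q, (T q).PosSemidef)
    (hST : ∀ q h, orthantProb (S q) h ≤ orthantProb (T q) h) (h : ι → ℝ) :
    orthantProb (B + ∑ q ∈ s, S q) h ≤ orthantProb (B + ∑ q ∈ s, T q) h := by
  classical
  induction s using Finset.induction_on generalizing h with
  | empty => simp
  | insert q s hq ih =>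
    have hsumS := posSemidef_sum s fun q _ ↦ hS q
    have hsumT := posSemidef_sum s fun q _ ↦ hT q
    rw [Finset.sum_insert hq, Finset.sum_insert hq, add_left_comm, add_left_comm B (T q)]
    calc orthantProb (S q + (B + ∑ q ∈ s, S q)) h
        ≤ orthantProb (T q + (B + ∑ q ∈ s, S q)) h :=
          orthantProb_add_le_add (hB.add hsumS) (hS q) (hT q) (hST q) h
      _ ≤ orthantProb (T q + (B + ∑ q ∈ s, T q)) h := by
          rw [add_comm (T q), add_comm (T q)]
          exact orthantProb_add_le_add (hT q) (hB.add hsumS) (hB.add hsumT) ih h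

/-- One step of the interpolation below: part of the independent noise `δ • 1` is replaced by noises
shared by pairs of coordinates. -/
lemma orthantProb_add_smul_one_le_of_row_sum_le {D : Matrix ι ι ℝ} {δ : ℝ} (hB : B.PosSemidef)
    (hD : D.IsSymm) (hdiag : ∀ i, D i i = 0) (hnonneg : ∀ i j, 0 ≤ D i j)
    (hrow : ∀ i, ∑ j, D i j ≤ δ) (h : ι → ℝ) :
    orthantProb (B + δ • 1) h ≤ orthantProb (B + D + δ • 1) h := by
  have hsplit : (δ • 1 : Matrix ι ι ℝ)
      = diagonal (fun i ↦ δ - ∑ j, D i j) + diagonal fun i ↦ ∑ j, D i j := by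
    rw [diagonal_add, smul_one_eq_diagonal]
    simp
  have hrest : (B + diagonal fun i ↦ δ - ∑ j, D i j).PosSemidef :=
    hB.add (.diagonal fun i ↦ sub_nonneg.2 (hrow i))
  have hweight : ∀ i j, 0 ≤ D i j / 2 := fun i j ↦ div_nonneg (hnonneg i j) zero_le_two
  calc orthantProb (B + δ • 1) h
      = orthantProb (B + diagonal (fun i ↦ δ - ∑ j, D i j)
          + ∑ q : ι × ι, (D q.1 q.2 / 2) • diagonal (pairVector q.1 q.2)) h := by
        rw [sum_smul_diagonal_pairVector hD, hsplit, add_assoc]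
    _ ≤ orthantProb (B + diagonal (fun i ↦ δ - ∑ j, D i j) + ∑ q : ι × ι,
          (D q.1 q.2 / 2) • vecMulVec (pairVector q.1 q.2) (pairVector q.1 q.2)) h := by
        refine orthantProb_add_sum_le _ hrest
          (fun q ↦ (PosSemidef.diagonal (pairVector_nonneg _ _)).smul (hweight _ _))
          (fun q ↦ (posSemidef_vecMulVec_self_star _).smul (hweight _ _)) (fun ⟨i, j⟩ g ↦ ?_) h
        rcases eq_or_ne i j with rfl | hij
        · simp [hdiag]
        · exact orthantProb_diagonal_pairVector_le (hweight i j) hij g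
    _ = orthantProb (B + D + δ • 1) h := by
        rw [sum_smul_vecMulVec_pairVector hD, hsplit]
        congr 1
        abel

lemma orthantProb_add_smul_one_le {δ : ℝ} (hδ : 0 < δ) (hA : A.PosSemidef) (hB : B.PosSemidef)
    (hdiag : ∀ i, A i i = B i i) (hle : ∀ i j, A i j ≤ B i j) (h : ι → ℝ) :
    orthantProb (A + δ • 1) h ≤ orthantProb (B + δ • 1) h := by
  have hsymm : (B - A).IsSymm := hB.isHermitian.sub hA.isHermitian
  have hnonneg : ∀ i j, 0 ≤ (B - A) i j := fun i j ↦ sub_nonneg.2 (hle i j)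
  obtain ⟨N, hN⟩ := exists_nat_gt ((∑ i, ∑ j, (B - A) i j) / δ)
  have hN0 : (0 : ℝ) < N := lt_of_le_of_lt (div_nonneg
    (Finset.sum_nonneg fun i _ ↦ Finset.sum_nonneg fun j _ ↦ hnonneg i j) hδ.le) hN
  have hrow : ∀ i, ∑ j, ((N : ℝ)⁻¹ • (B - A)) i j ≤ δ := fun i ↦ by
    simp only [Matrix.smul_apply, smul_eq_mul, ← Finset.mul_sum]
    rw [inv_mul_le_iff₀ hN0]
    exact (Finset.single_le_sum (f := fun i ↦ ∑ j, (B - A) i j)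
      (fun i _ ↦ Finset.sum_nonneg fun j _ ↦ hnonneg i j) (Finset.mem_univ i)).trans
      ((div_lt_iff₀ hδ).1 hN).le
  have hinterp : ∀ k : ℕ, k ≤ N → orthantProb (A + δ • 1) h
      ≤ orthantProb (A + (k * (N : ℝ)⁻¹) • (B - A) + δ • 1) h := by
    intro k
    induction k with
    | zero => simp
    | succ k ih =>
      intro hk
      have hk1 : k * (N : ℝ)⁻¹ ≤ 1 := by
        rw [← div_eq_mul_inv, div_le_one hN0]
        exact_mod_cast (Nat.le_succ k).trans hk
      have hsucc : A + ((k + 1 : ℕ) * (N : ℝ)⁻¹) • (B - A)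
          = A + (k * (N : ℝ)⁻¹) • (B - A) + (N : ℝ)⁻¹ • (B - A) := by
        push_cast
        module
      rw [hsucc]
      exact (ih (by lia)).trans <| orthantProb_add_smul_one_le_of_row_sum_le
        (posSemidef_add_smul_sub hA hB (by positivity) hk1) (hsymm.smul _)
        (fun i ↦ by simp [hdiag]) (fun i j ↦ mul_nonneg (by positivity) (hnonneg i j)) hrow h
  simpa [hN0.ne'] using hinterp N le_rfl

end Slepian

section Noise

open Matrix WithLp

variable {ι : Type*} [Fintype ι] [DecidableEq ι] {S T N : Matrix ι ι ℝ} {c r : ℝ}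

lemma gaussianReal_Ici_le {v : NNReal} (hc : 0 ≤ c) (hv : v ≤ c) (hr : 0 ≤ r) :
    gaussianReal 0 v (Set.Ici r) ≤ ENNReal.ofReal (Real.exp (-r ^ 2 / (2 * c))) := by
  have hsub : HasSubgaussianMGF id c.toNNReal (gaussianReal 0 v) :=
    { integrable_exp_mul := fun t ↦ integrable_exp_mul_gaussianReal t
      mgf_le := fun t ↦ by
        simp only [mgf_id_gaussianReal, Real.coe_toNNReal _ hc, zero_mul, zero_add]
        gcongr }
  have h := hsub.measure_ge_le hr
  rw [Real.coe_toNNReal _ hc] at h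
  exact (ENNReal.le_ofReal_iff_toReal_le (measure_ne_top _ _) (Real.exp_nonneg _)).2 h

lemma gaussianReal_lt_abs_le {v : NNReal} (hc : 0 ≤ c) (hv : v ≤ c) (hr : 0 ≤ r) :
    gaussianReal 0 v {x | r < |x|} ≤ 2 * ENNReal.ofReal (Real.exp (-r ^ 2 / (2 * c))) := by
  have hneg : gaussianReal 0 v ((fun x ↦ -x) ⁻¹' Set.Ici r) = gaussianReal 0 v (Set.Ici r) := by
    rw [← Measure.map_apply measurable_neg measurableSet_Ici, gaussianReal_map_neg, neg_zero]
  calc gaussianReal 0 v {x | r < |x|}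
      ≤ gaussianReal 0 v (Set.Ici r ∪ (fun x ↦ -x) ⁻¹' Set.Ici r) :=
        measure_mono fun x hx ↦ (lt_abs.1 hx).imp (fun h ↦ h.le) fun h ↦ le_of_lt (α := ℝ) h
    _ ≤ gaussianReal 0 v (Set.Ici r) + gaussianReal 0 v ((fun x ↦ -x) ⁻¹' Set.Ici r) :=
        measure_union_le _ _
    _ ≤ 2 * ENNReal.ofReal (Real.exp (-r ^ 2 / (2 * c))) := by
        rw [hneg, ← two_mul]
        gcongr
        exact gaussianReal_Ici_le hc hv hr

lemma multivariateGaussian_exists_lt_abs_le (hS : S.PosSemidef) (hc : 0 ≤ c)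
    (hSc : ∀ i, S i i ≤ c) (hr : 0 ≤ r) :
    multivariateGaussian 0 S {x | ∃ i, r < |x i|}
      ≤ 2 * Fintype.card ι * ENNReal.ofReal (Real.exp (-r ^ 2 / (2 * c))) := by
  have hcoord : ∀ i, multivariateGaussian 0 S ((fun x ↦ x i) ⁻¹' {y | r < |y|})
      ≤ 2 * ENNReal.ofReal (Real.exp (-r ^ 2 / (2 * c))) := fun i ↦ by
    rw [multivariateGaussian_preimage_eval hS i (measurableSet_lt (by fun_prop) (by fun_prop))]
    exact gaussianReal_lt_abs_le hc (by rw [Real.coe_toNNReal _ hS.diag_nonneg]; exact hSc i) hr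
  calc multivariateGaussian 0 S {x | ∃ i, r < |x i|}
      = multivariateGaussian 0 S (⋃ i, (fun x ↦ x i) ⁻¹' {y | r < |y|}) := by
        congr 1
        ext x
        simp
    _ ≤ ∑ i, multivariateGaussian 0 S ((fun x ↦ x i) ⁻¹' {y | r < |y|}) :=
        measure_iUnion_fintype_le _ _
    _ ≤ ∑ _ : ι, 2 * ENNReal.ofReal (Real.exp (-r ^ 2 / (2 * c))) :=
        Finset.sum_le_sum fun i _ ↦ hcoord i
    _ = 2 * Fintype.card ι * ENNReal.ofReal (Real.exp (-r ^ 2 / (2 * c))) := by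
        rw [Finset.sum_const, Finset.card_univ, nsmul_eq_mul]
        ring

lemma lintegral_le_lintegral_add_measure {α : Type*} [MeasurableSpace α] {μ : Measure α}
    {f g : α → ℝ≥0∞} {s : Set α} (hf : f ≤ 1) (hfg : ∀ x ∉ s, f x ≤ g x) :
    ∫⁻ x, f x ∂μ ≤ ∫⁻ x, g x ∂μ + μ s := by
  calc ∫⁻ x, f x ∂μ ≤ ∫⁻ x, (g x + (toMeasurable μ s).indicator 1 x) ∂μ := by
        refine lintegral_mono fun x ↦ ?_
        by_cases hx : x ∈ toMeasurable μ s
        · simpa [hx] using (hf x).trans le_add_self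
        · simpa [hx] using hfg x fun h ↦ hx (subset_toMeasurable μ s h)
    _ = ∫⁻ x, g x ∂μ + μ s := by
        rw [lintegral_add_right _ (measurable_one.indicator (measurableSet_toMeasurable _ _)),
          lintegral_indicator_one (measurableSet_toMeasurable _ _), measure_toMeasurable]

lemma orthantProb_le_add_noise (hS : S.PosSemidef) (hN : N.PosSemidef) (hc : 0 ≤ c)
    (hNc : ∀ i, N i i ≤ c) (hr : 0 ≤ r) (h : ι → ℝ) :
    orthantProb S h ≤ orthantProb (S + N) (fun i ↦ h i + r)
      + 2 * Fintype.card ι * ENNReal.ofReal (Real.exp (-r ^ 2 / (2 * c))) := by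
  calc orthantProb S h = ∫⁻ _, orthantProb S h ∂(multivariateGaussian 0 N) := by simp
    _ ≤ ∫⁻ x, orthantProb S ((fun i ↦ h i + r) - ofLp x) ∂(multivariateGaussian 0 N)
        + multivariateGaussian 0 N {x | ∃ i, r < |x i|} :=
      lintegral_le_lintegral_add_measure (fun _ ↦ orthantProb_le_one S h) fun x hx ↦
        orthantProb_mono S fun i ↦ by
          simp only [Set.mem_ofPred_eq, not_exists, not_lt] at hx
          simp only [Pi.sub_apply]
          linarith [(abs_le.1 (hx i)).2]
    _ ≤ orthantProb (S + N) (fun i ↦ h i + r)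
        + 2 * Fintype.card ι * ENNReal.ofReal (Real.exp (-r ^ 2 / (2 * c))) := by
      rw [orthantProb_add hS hN]
      gcongr
      exact multivariateGaussian_exists_lt_abs_le hN hc hNc hr

lemma orthantProb_add_noise_le (hS : S.PosSemidef) (hN : N.PosSemidef) (hc : 0 ≤ c)
    (hNc : ∀ i, N i i ≤ c) (hr : 0 ≤ r) (h : ι → ℝ) :
    orthantProb (S + N) h ≤ orthantProb S (fun i ↦ h i + r)
      + 2 * Fintype.card ι * ENNReal.ofReal (Real.exp (-r ^ 2 / (2 * c))) := by
  rw [orthantProb_add hS hN]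
  calc ∫⁻ x, orthantProb S (h - ofLp x) ∂(multivariateGaussian 0 N)
      ≤ ∫⁻ _, orthantProb S (fun i ↦ h i + r) ∂(multivariateGaussian 0 N)
        + multivariateGaussian 0 N {x | ∃ i, r < |x i|} :=
      lintegral_le_lintegral_add_measure (fun _ ↦ orthantProb_le_one S _) fun x hx ↦
        orthantProb_mono S fun i ↦ by
          simp only [Set.mem_ofPred_eq, not_exists, not_lt] at hx
          simp only [Pi.sub_apply]
          linarith [(abs_le.1 (hx i)).1]
    _ ≤ orthantProb S (fun i ↦ h i + r)
        + 2 * Fintype.card ι * ENNReal.ofReal (Real.exp (-r ^ 2 / (2 * c))) := by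
      rw [lintegral_const, measure_univ, mul_one]
      gcongr
      exact multivariateGaussian_exists_lt_abs_le hN hc hNc hr

open Filter Topology in
lemma le_orthantProb_of_forall_pos_le_add {S : Matrix ι ι ℝ} {h : ι → ℝ} {p : ℝ≥0∞}
    (hp : ∀ r > 0, p ≤ orthantProb S fun i ↦ h i + r) : p ≤ orthantProb S h := by
  have hIic : ⋂ r > (0 : ℝ), {x : EuclideanSpace ℝ ι | ∀ i, x i ≤ h i + r}
      = {x | ∀ i, x i ≤ h i} := by
    ext x
    simp only [Set.mem_iInter, Set.mem_ofPred_eq]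
    exact ⟨fun hx i ↦ le_of_forall_pos_le_add fun r hr ↦ hx r hr i,
      fun hx r hr i ↦ (hx i).trans (le_add_of_nonneg_right hr.le)⟩
  have hlim : Tendsto (fun r ↦ orthantProb S fun i ↦ h i + r) (𝓝[>] 0) (𝓝 (orthantProb S h)) := by
    rw [orthantProb, ← hIic]
    exact tendsto_measure_biInter_gt (fun r _ ↦ (measurableSet_orthant _).nullMeasurableSet)
      (fun r s _ hrs x hx i ↦ (hx i).trans (add_le_add_right hrs _))
      ⟨1, one_pos, measure_ne_top _ _⟩
  exact ge_of_tendsto hlim (eventually_mem_nhdsWithin.mono hp)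

open Filter Topology in
lemma tendsto_mul_ofReal_exp_neg_sq_div (hr : 0 < r) {a : ℝ≥0∞} (ha : a ≠ ∞) :
    Tendsto (fun δ : ℝ ↦ a * ENNReal.ofReal (Real.exp (-r ^ 2 / (2 * δ)))) (𝓝[>] 0) (𝓝 0) := by
  have hexp : Tendsto (fun δ : ℝ ↦ Real.exp (-r ^ 2 / (2 * δ))) (𝓝[>] 0) (𝓝 0) := by
    refine Real.tendsto_exp_atBot.comp ?_
    have h := (tendsto_inv_nhdsGT_zero (𝕜 := ℝ)).const_mul_atTop_of_neg
      (show -r ^ 2 / 2 < 0 by nlinarith [pow_pos hr 2])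
    refine h.congr fun δ ↦ by rw [← div_eq_mul_inv, div_div]
  simpa using ENNReal.Tendsto.const_mul (ENNReal.tendsto_ofReal hexp) (.inr ha)

open Filter Topology in
/-- **Slepian's inequality**. -/
theorem orthantProb_le_of_le (hS : S.PosSemidef) (hT : T.PosSemidef)
    (hdiag : ∀ i, S i i = T i i) (hle : ∀ i j, S i j ≤ T i j) (h : ι → ℝ) :
    orthantProb S h ≤ orthantProb T h := by
  refine le_orthantProb_of_forall_pos_le_add fun r hr ↦ ?_
  set a : ℝ≥0∞ := 2 * Fintype.card ι
  set e : ℝ → ℝ≥0∞ := fun δ ↦ a * ENNReal.ofReal (Real.exp (-(r / 2) ^ 2 / (2 * δ)))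
  have he : Tendsto e (𝓝[>] 0) (𝓝 0) :=
    tendsto_mul_ofReal_exp_neg_sq_div (half_pos hr) (by finiteness)
  have hbound : ∀ δ > 0, orthantProb S h ≤ orthantProb T (fun i ↦ h i + r) + e δ + e δ := by
    intro δ hδ
    have hN : (δ • (1 : Matrix ι ι ℝ)).PosSemidef := PosSemidef.one.smul hδ.le
    have hNδ : ∀ i, (δ • (1 : Matrix ι ι ℝ)) i i ≤ δ := fun i ↦ by simp [Matrix.smul_apply]
    have hr2 : 0 ≤ r / 2 := by positivity
    calc orthantProb S h ≤ orthantProb (S + δ • 1) (fun i ↦ h i + r / 2) + e δ :=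
          orthantProb_le_add_noise hS hN hδ.le hNδ hr2 h
      _ ≤ orthantProb (T + δ • 1) (fun i ↦ h i + r / 2) + e δ := by
          gcongr
          exact orthantProb_add_smul_one_le hδ hS hT hdiag hle _
      _ ≤ orthantProb T (fun i ↦ h i + r / 2 + r / 2) + e δ + e δ := by
          gcongr
          exact orthantProb_add_noise_le hT hN hδ.le hNδ hr2 _
      _ = orthantProb T (fun i ↦ h i + r) + e δ + e δ := by simp only [add_assoc, add_halves]
  refine ge_of_tendsto (x := 𝓝[>] (0 : ℝ)) ?_ (eventually_mem_nhdsWithin.mono hbound)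
  simpa using (tendsto_const_nhds.add he).add he

/-- Slepian's inequality applies once independent noises are added to the coordinates of the first
vector and a common noise to those of the second. -/
theorem orthantProb_le_of_abs_sub_le (hS : S.PosSemidef) (hT : T.PosSemidef)
    (hc : 0 ≤ c) (hST : ∀ i j, |S i j - T i j| ≤ c) (hr : 0 ≤ r) (h : ι → ℝ) :
    orthantProb S h ≤ orthantProb T (fun i ↦ h i + 2 * r)
      + 4 * Fintype.card ι * ENNReal.ofReal (Real.exp (-r ^ 2 / (4 * c))) := by
  have hclose := fun i j ↦ abs_le.1 (hST i j)
  set d : ι → ℝ := fun i ↦ T i i + c - S i i with hd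
  have hD : (diagonal d).PosSemidef := .diagonal fun i ↦ by
    simp only [hd, Pi.zero_apply]
    linarith [hclose i i]
  have hJ : (c • vecMulVec 1 (1 : ι → ℝ)).PosSemidef :=
    (posSemidef_vecMulVec_self_star 1).smul hc
  set e := 2 * Fintype.card ι * ENNReal.ofReal (Real.exp (-r ^ 2 / (2 * (2 * c)))) with he
  calc orthantProb S h ≤ orthantProb (S + diagonal d) (fun i ↦ h i + r) + e :=
        orthantProb_le_add_noise hS hD (by positivity)
          (fun i ↦ by simp only [diagonal_apply_eq, hd]; linarith [hclose i i]) hr h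
    _ ≤ orthantProb (T + c • vecMulVec 1 1) (fun i ↦ h i + r) + e := by
        gcongr
        refine orthantProb_le_of_le (hS.add hD) (hT.add hJ) (fun i ↦ by simp [hd])
          (fun i j ↦ ?_) _
        rcases eq_or_ne i j with rfl | hij
        · simp [hd]
        · simpa [hij] using by linarith [hclose i j]
    _ ≤ orthantProb T (fun i ↦ h i + r + r) + e + e := by
        gcongr
        exact orthantProb_add_noise_le hT hJ (by positivity) (fun i ↦ by simp; linarith) hr _
    _ = orthantProb T (fun i ↦ h i + 2 * r)
        + 4 * Fintype.card ι * ENNReal.ofReal (Real.exp (-r ^ 2 / (4 * c))) := by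
        rw [he, add_assoc, ← two_mul, ← mul_assoc 2 2 c]
        simp only [add_assoc, ← two_mul]
        congr 1
        rw [← mul_assoc, ← mul_assoc]
        norm_num

end Noise

section Conditioning

variable {ι Ω : Type*} [MeasurableSpace Ω] {P : Measure Ω} {X : ι → Ω → ℝ} {Z : Ω → ℝ}

/-- The slopes of the linear regression of the `X i` on `Z`. -/
def regressionCoeff (X : ι → Ω → ℝ) (Z : Ω → ℝ) (P : Measure Ω) (i : ι) : ℝ :=
  cov[X i, Z; P] / Var[Z; P]

/-- The residuals of the linear regression of the `X i` on `Z`, which for a Gaussian family are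
independent of `Z`. -/
def regressionResidual (X : ι → Ω → ℝ) (Z : Ω → ℝ) (P : Measure Ω) (i : ι) : Ω → ℝ :=
  X i - regressionCoeff X Z P i • Z

section Covariance

variable [IsFiniteMeasure P] (hX : ∀ i, MemLp (X i) 2 P) (hZ : MemLp Z 2 P)
include hX hZ

lemma covariance_regressionResidual_left (hvar : Var[Z; P] ≠ 0) (i : ι) :
    cov[regressionResidual X Z P i, Z; P] = 0 := by
  rw [regressionResidual, covariance_sub_left (hX i) (hZ.const_smul _) hZ, covariance_smul_left,
    covariance_self hZ.aemeasurable, regressionCoeff, div_mul_cancel₀ _ hvar, sub_self]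

lemma covarianceMatrix_regressionResidual_apply (i j : ι) :
    covarianceMatrix (regressionResidual X Z P) P i j
      = cov[X i, X j; P] - cov[X i, Z; P] * cov[X j, Z; P] / Var[Z; P] := by
  rw [covarianceMatrix, Matrix.of_apply, regressionResidual, regressionResidual,
    covariance_sub_sub (hX i) (hZ.const_smul _) (hX j) (hZ.const_smul _)]
  simp only [covariance_smul_left, covariance_smul_right,
    covariance_self hZ.aemeasurable, covariance_comm Z (X j), regressionCoeff]
  rcases eq_or_ne Var[Z; P] 0 with hvar | hvar
  · simp [hvar]
  · field_simp
    ring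

end Covariance

section Finite

variable [Finite ι]

lemma measure_setOf_forall_add_mul_le_inter_preimage [IsProbabilityMeasure P]
    (hX : ∀ i, AEMeasurable (X i) P) (hZ : AEMeasurable Z P) (hXZ : (fun ω ↦ (X · ω)) ⟂ᵢ[P] Z)
    (β h : ι → ℝ) {A : Set ℝ} (hA : MeasurableSet A) :
    P ({ω | ∀ i, X i ω + β i * Z ω ≤ h i} ∩ Z ⁻¹' A)
      = ∫⁻ s in A, P {ω | ∀ i, X i ω ≤ h i - β i * s} ∂(P.map Z) := by
  have hX' : AEMeasurable (fun ω ↦ (X · ω)) P := aemeasurable_pi_lambda _ hX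
  have hmap : ∀ g : ι → ℝ, P.map (fun ω ↦ (X · ω)) {x | ∀ i, x i ≤ g i}
      = P {ω | ∀ i, X i ω ≤ g i} := fun g ↦
    Measure.map_apply_of_aemeasurable hX' (by measurability)
  have hE : MeasurableSet
      ({p : (ι → ℝ) × ℝ | ∀ i, p.1 i + β i * p.2 ≤ h i} ∩ Prod.snd ⁻¹' A) := by
    refine MeasurableSet.inter ?_ (measurable_snd hA)
    measurability
  have := Measure.isProbabilityMeasure_map (μ := P) hX'
  calc P ({ω | ∀ i, X i ω + β i * Z ω ≤ h i} ∩ Z ⁻¹' A)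
      = ((P.map fun ω ↦ (X · ω)).prod (P.map Z))
          ({p | ∀ i, p.1 i + β i * p.2 ≤ h i} ∩ Prod.snd ⁻¹' A) := by
        rw [← (indepFun_iff_map_prod_eq_prod_map_map hX' hZ).1 hXZ,
          Measure.map_apply_of_aemeasurable (hX'.prodMk hZ) hE]
        rfl
    _ = ∫⁻ s, A.indicator (fun s ↦ P {ω | ∀ i, X i ω ≤ h i - β i * s}) s ∂(P.map Z) := by
        rw [Measure.prod_apply_symm hE]
        refine lintegral_congr fun s ↦ ?_
        by_cases hs : s ∈ A
        · rw [Set.indicator_of_mem hs, ← hmap]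
          congr 1
          ext x
          simp [hs, le_sub_iff_add_le]
        · rw [Set.indicator_of_notMem hs]
          refine measure_mono_null (t := ∅) (fun x hx ↦ hs hx.2) measure_empty
    _ = ∫⁻ s in A, P {ω | ∀ i, X i ω ≤ h i - β i * s} ∂(P.map Z) := lintegral_indicator hA _

lemma hasGaussianLaw_regressionResidual_prodMk
    (hXZ : HasGaussianLaw (fun ω ↦ ((X · ω), Z ω)) P) :
    HasGaussianLaw (fun ω ↦ ((regressionResidual X Z P · ω), Z ω)) P := by
  have := Fintype.ofFinite ι
  refine (hXZ.map ((ContinuousLinearMap.fst ℝ (ι → ℝ) ℝ - (ContinuousLinearMap.snd ℝ (ι → ℝ) ℝ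
    ).smulRight (regressionCoeff X Z P)).prod (.snd ℝ _ ℝ))).congr (.of_forall fun ω ↦ ?_)
  ext i
  · simp [regressionResidual, mul_comm]
  · simp

lemma indepFun_regressionResidual (hXZ : HasGaussianLaw (fun ω ↦ ((X · ω), Z ω)) P)
    (hvar : Var[Z; P] ≠ 0) : (fun ω ↦ (regressionResidual X Z P · ω)) ⟂ᵢ[P] Z := by
  have := Fintype.ofFinite ι
  have := hXZ.isProbabilityMeasure
  have hres := hasGaussianLaw_regressionResidual_prodMk hXZ
  have hunit : HasGaussianLaw (fun ω ↦ ((regressionResidual X Z P · ω), fun _ : Unit ↦ Z ω)) P :=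
    hres.map_fun (F := (ι → ℝ) × (Unit → ℝ))
      ((ContinuousLinearMap.id ℝ (ι → ℝ)).prodMap (.pi fun _ ↦ .id ℝ ℝ))
  have h := hunit.indepFun_of_covariance_eval fun i _ ↦
    covariance_regressionResidual_left (fun i ↦ (hXZ.fst.eval i).memLp_two) hXZ.snd.memLp_two hvar i
  exact h.comp measurable_id (measurable_pi_apply ())

end Finite

variable [Fintype ι] [DecidableEq ι]

theorem measure_setOf_forall_le_inter_preimage_eq_lintegral_orthantProb
    (hXZ : HasGaussianLaw (fun ω ↦ ((X · ω), Z ω)) P) (hX : ∀ i, P[X i] = 0) (hZ : P[Z] = 0)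
    (hvar : Var[Z; P] ≠ 0) (h : ι → ℝ) {A : Set ℝ} (hA : MeasurableSet A) :
    P ({ω | ∀ i, X i ω ≤ h i} ∩ Z ⁻¹' A)
      = ∫⁻ s in A, orthantProb (covarianceMatrix (regressionResidual X Z P) P)
          (fun i ↦ h i - regressionCoeff X Z P i * s) ∂(gaussianReal 0 Var[Z; P].toNNReal) := by
  have hres := (hasGaussianLaw_regressionResidual_prodMk hXZ).fst
  have := hXZ.isProbabilityMeasure
  have hmean : ∀ i, P[regressionResidual X Z P i] = 0 := fun i ↦ by
    rw [regressionResidual, integral_sub' (hXZ.fst.eval i).integrable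
      (hXZ.snd.integrable.smul _)]
    simp only [Pi.smul_apply, integral_smul, hX, hZ, smul_zero, sub_zero]
  have hres_eq := measure_setOf_forall_add_mul_le_inter_preimage
    (fun i ↦ (hres.eval i).aemeasurable) hXZ.snd.aemeasurable (indepFun_regressionResidual hXZ hvar)
    (regressionCoeff X Z P) h hA
  simp only [measure_forall_le_eq_orthantProb hres hmean, hXZ.snd.map_eq_gaussianReal, hZ]
    at hres_eq
  simpa [regressionResidual] using hres_eq

end Conditioning

section DensityRatio

lemma gaussianPDFReal_le_exp_mul_gaussianPDFReal {v w : NNReal} (hv : v ≠ 0) (hw : w ≠ 0)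
    (μ x : ℝ) :
    gaussianPDFReal μ v x
      ≤ Real.exp ((v - w) / (2 * v) * ((x - μ) ^ 2 / w - 1)) * gaussianPDFReal μ w x := by
  have : (0 : ℝ) < v := NNReal.coe_pos.2 (pos_iff_ne_zero.2 hv)
  have : (0 : ℝ) < w := NNReal.coe_pos.2 (pos_iff_ne_zero.2 hw)
  have hsqrt : √(w / v : ℝ) ≤ Real.exp ((w - v) / (2 * v)) := by
    rw [Real.sqrt_le_left (Real.exp_nonneg _), ← Real.exp_nat_mul]
    calc (w / v : ℝ) = (w - v) / v + 1 := by field_simp; ring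
      _ ≤ Real.exp ((w - v) / v) := Real.add_one_le_exp _
      _ = Real.exp ((2 : ℕ) * ((w - v) / (2 * v))) := by congr 1; push_cast; field_simp
  have hinv : (√(2 * Real.pi * v))⁻¹ = √(w / v : ℝ) * (√(2 * Real.pi * w))⁻¹ := by
    rw [← Real.sqrt_inv, ← Real.sqrt_inv, ← Real.sqrt_mul (by positivity)]
    congr 1
    field_simp
  calc gaussianPDFReal μ v x
      = √(w / v : ℝ) * ((√(2 * Real.pi * w))⁻¹ * Real.exp (-(x - μ) ^ 2 / (2 * v))) := by
        rw [gaussianPDFReal, hinv, mul_assoc]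
    _ ≤ Real.exp ((w - v) / (2 * v))
          * ((√(2 * Real.pi * w))⁻¹ * Real.exp (-(x - μ) ^ 2 / (2 * v))) := by gcongr
    _ = Real.exp ((v - w) / (2 * v) * ((x - μ) ^ 2 / w - 1)) * gaussianPDFReal μ w x := by
        rw [gaussianPDFReal, mul_left_comm, mul_left_comm (Real.exp _), ← Real.exp_add,
          ← Real.exp_add]
        congr 2
        field_simp
        ring

lemma restrict_gaussianReal_le {μ ρ : ℝ} {v w : NNReal} (hv : v ≠ 0) (hw : w ≠ 0) {A : Set ℝ}
    (hA : MeasurableSet A) (hρ : ∀ x ∈ A, (v - w) / (2 * v) * ((x - μ) ^ 2 / w - 1) ≤ ρ) :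
    (gaussianReal μ v).restrict A
      ≤ ENNReal.ofReal (Real.exp ρ) • (gaussianReal μ w).restrict A := by
  refine Measure.le_iff.2 fun B hB ↦ ?_
  rw [Measure.smul_apply, Measure.restrict_apply hB, Measure.restrict_apply hB,
    gaussianReal_apply _ hv, gaussianReal_apply _ hw, smul_eq_mul,
    ← lintegral_const_mul _ (measurable_gaussianPDF _ _)]
  refine setLIntegral_mono' (hB.inter hA) fun x hx ↦ ?_
  rw [gaussianPDF, gaussianPDF, ← ENNReal.ofReal_mul (Real.exp_nonneg _)]
  refine ENNReal.ofReal_le_ofReal ((gaussianPDFReal_le_exp_mul_gaussianPDFReal hv hw μ x).trans ?_)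
  gcongr
  · exact gaussianPDFReal_nonneg _ _ _
  · exact hρ x hx.2

end DensityRatio

section Comparison

variable {ι Ω Ω' : Type*} [Fintype ι] [MeasurableSpace Ω] [MeasurableSpace Ω']
  {P : Measure Ω} {P' : Measure Ω'} {X : ι → Ω → ℝ} {Z : Ω → ℝ} {X' : ι → Ω' → ℝ} {Z' : Ω' → ℝ}

theorem measure_setOf_forall_le_inter_preimage_le
    (hXZ : HasGaussianLaw (fun ω ↦ ((X · ω), Z ω)) P) (hX : ∀ i, P[X i] = 0) (hZ : P[Z] = 0)
    (hXZ' : HasGaussianLaw (fun ω ↦ ((X' · ω), Z' ω)) P') (hX' : ∀ i, P'[X' i] = 0)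
    (hZ' : P'[Z'] = 0) (hvar : 0 < Var[Z; P]) (hvar' : 0 < Var[Z'; P'])
    {A : Set ℝ} (hA : MeasurableSet A) {c r δ ρ : ℝ} (hc : 0 ≤ c) (hr : 0 ≤ r)
    (hcov : ∀ i j, |covarianceMatrix (regressionResidual X Z P) P i j
      - covarianceMatrix (regressionResidual X' Z' P') P' i j| ≤ c)
    (hδ : ∀ i, ∀ s ∈ A, (regressionCoeff X' Z' P' i - regressionCoeff X Z P i) * s ≤ δ)
    (hρ : ∀ s ∈ A, (Var[Z; P] - Var[Z'; P']) / (2 * Var[Z; P]) * (s ^ 2 / Var[Z'; P'] - 1) ≤ ρ)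
    (h : ι → ℝ) :
    P ({ω | ∀ i, X i ω ≤ h i} ∩ Z ⁻¹' A)
      ≤ ENNReal.ofReal (Real.exp ρ) * P' ({ω | ∀ i, X' i ω ≤ h i + (2 * r + δ)} ∩ Z' ⁻¹' A)
        + 4 * Fintype.card ι * ENNReal.ofReal (Real.exp (-r ^ 2 / (4 * c))) := by
  classical
  have := hXZ.isProbabilityMeasure
  have := hXZ'.isProbabilityMeasure
  have hpsd : (covarianceMatrix (regressionResidual X Z P) P).PosSemidef :=
    posSemidef_covarianceMatrix
      fun i ↦ ((hasGaussianLaw_regressionResidual_prodMk hXZ).fst.eval i).memLp_two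
  have hpsd' : (covarianceMatrix (regressionResidual X' Z' P') P').PosSemidef :=
    posSemidef_covarianceMatrix
      fun i ↦ ((hasGaussianLaw_regressionResidual_prodMk hXZ').fst.eval i).memLp_two
  set S := covarianceMatrix (regressionResidual X Z P) P
  set S' := covarianceMatrix (regressionResidual X' Z' P') P'
  set E := 4 * Fintype.card ι * ENNReal.ofReal (Real.exp (-r ^ 2 / (4 * c)))
  rw [measure_setOf_forall_le_inter_preimage_eq_lintegral_orthantProb hXZ hX hZ hvar.ne' h hA,
    measure_setOf_forall_le_inter_preimage_eq_lintegral_orthantProb hXZ' hX' hZ' hvar'.ne' _ hA]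
  have hpointwise : ∀ s ∈ A, orthantProb S (fun i ↦ h i - regressionCoeff X Z P i * s)
      ≤ orthantProb S' (fun i ↦ h i + (2 * r + δ) - regressionCoeff X' Z' P' i * s) + E :=
    fun s hs ↦ (orthantProb_le_of_abs_sub_le hpsd hpsd' hc hcov hr _).trans <| by
      gcongr
      exact orthantProb_mono _ fun i ↦ by linarith [hδ i s hs]
  have hdensity := restrict_gaussianReal_le (μ := 0) (ρ := ρ) (Real.toNNReal_pos.2 hvar).ne'
    (Real.toNNReal_pos.2 hvar').ne' hA fun s hs ↦ by
      simpa only [Real.coe_toNNReal _ hvar.le, Real.coe_toNNReal _ hvar'.le, sub_zero] using hρ s hs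
  refine (setLIntegral_mono' hA hpointwise).trans ?_
  rw [lintegral_add_right _ measurable_const, lintegral_const, Measure.restrict_apply_univ,
    ← smul_eq_mul (ENNReal.ofReal _), ← lintegral_smul_measure]
  exact add_le_add (lintegral_mono' hdensity le_rfl) (mul_le_of_le_one_right' prob_le_one)

end Comparison

section NearGaussianWalk

variable {Ω : Type*} [MeasurableSpace Ω] {P : Measure Ω} {G : ℕ → Ω → ℝ} {n m : ℕ} {C : ℝ}

/-- `G` is, at the times `1, …, n`, a centered Gaussian process whose covariance differs from that
of the Gaussian random walk by at most `C`. -/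
structure IsNearGaussianWalk (P : Measure Ω) (G : ℕ → Ω → ℝ) (n : ℕ) (C : ℝ) : Prop where
  hasGaussianLaw : HasGaussianLaw (fun ω (i : Fin n) ↦ G (i + 1) ω) P
  integral_eq_zero : ∀ i, 1 ≤ i → i ≤ n → P[G i] = 0
  abs_covariance_sub_min_le : ∀ i j, 1 ≤ i → i ≤ n → 1 ≤ j → j ≤ n →
    |cov[G i, G j; P] - ((min i j : ℕ) : ℝ)| ≤ C

lemma abs_div_sub_div_le {a k x N : ℝ} (hN0 : 0 < N) (hN : 2 * C ≤ N) (ha : |a - x| ≤ C)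
    (hk : |k - N| ≤ C) (hx : 0 ≤ x) (hxN : x ≤ N) : |a / k - x / N| ≤ 4 * C / N := by
  have hC : 0 ≤ C := (abs_nonneg _).trans ha
  rw [abs_le] at ha hk
  have hk0 : 0 < k := by linarith
  have hdiff : a / k - x / N = ((a - x) * N + x * (N - k)) / (k * N) := by
    field_simp
    ring
  have hnum : |(a - x) * N + x * (N - k)| ≤ 2 * C * N := by
    rw [abs_le]
    constructor <;> nlinarith
  rw [hdiff, abs_div, abs_of_pos (mul_pos hk0 hN0), div_le_div_iff₀ (by positivity) hN0]
  nlinarith [mul_nonneg hC hN0.le]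

lemma abs_sub_mul_div_sub_le {r a b k x y z N : ℝ} (hN0 : 0 < N) (hN : 2 * C ≤ N)
    (hr : |r - z| ≤ C) (ha : |a - x| ≤ C) (hb : |b - y| ≤ C) (hk : |k - N| ≤ C)
    (hx : 0 ≤ x) (hxN : x ≤ N) (hy : 0 ≤ y) (hyN : y ≤ N) :
    |(r - a * b / k) - (z - x * y / N)| ≤ 8 * C := by
  have hC : 0 ≤ C := (abs_nonneg _).trans ha
  have hdiff : (r - a * b / k) - (z - x * y / N)
      = (r - z) - (a * (b / k - y / N) + (a - x) * (y / N)) := by ring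
  have hslope : |a * (b / k - y / N)| ≤ 6 * C := by
    have haN : |a| ≤ 3 / 2 * N := by
      rw [abs_le] at ha ⊢
      constructor <;> linarith
    calc |a * (b / k - y / N)| ≤ (3 / 2 * N) * (4 * C / N) := by
          rw [abs_mul]
          exact mul_le_mul haN (abs_div_sub_div_le hN0 hN hb hk hy hyN) (abs_nonneg _)
            (by positivity)
      _ = 6 * C := by field_simp; ring
  have hmul : |(a - x) * (y / N)| ≤ C := by
    rw [abs_mul, abs_of_nonneg (div_nonneg hy hN0.le)]
    exact (mul_le_of_le_one_right (abs_nonneg _) ((div_le_one hN0).2 hyN)).trans ha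
  rw [hdiff]
  rw [abs_le] at hslope hmul hr ⊢
  constructor <;> linarith

namespace IsNearGaussianWalk

variable (hG : IsNearGaussianWalk P G (m + 1) C)
include hG

lemma hasGaussianLaw_prodMk :
    HasGaussianLaw (fun ω ↦ (fun i : Fin m ↦ G (i + 1) ω, G (m + 1) ω)) P :=
  hG.hasGaussianLaw.map_fun (F := (Fin m → ℝ) × ℝ)
    ((ContinuousLinearMap.pi fun i : Fin m ↦ .proj i.castSucc).prod (.proj (Fin.last m)))

lemma abs_covariance_last_sub_le {i : ℕ} (hi : 1 ≤ i) (him : i ≤ m + 1) :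
    |cov[G i, G (m + 1); P] - i| ≤ C := by
  simpa [min_eq_left him] using hG.abs_covariance_sub_min_le i (m + 1) hi him (by lia) le_rfl

lemma abs_variance_last_sub_le : |Var[G (m + 1); P] - (m + 1 : ℕ)| ≤ C := by
  rw [← covariance_self hG.hasGaussianLaw_prodMk.snd.aemeasurable]
  exact hG.abs_covariance_last_sub_le (by lia) le_rfl

lemma half_le_variance_last (hm : 2 * C ≤ (m + 1 : ℕ)) :
    ((m + 1 : ℕ) : ℝ) / 2 ≤ Var[G (m + 1); P] := by
  linarith [(abs_le.1 hG.abs_variance_last_sub_le).1]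

lemma abs_regressionCoeff_sub_le (hm : 2 * C ≤ (m + 1 : ℕ)) (i : Fin m) :
    |regressionCoeff (fun i : Fin m ↦ G (i + 1)) (G (m + 1)) P i
      - ((i + 1 : ℕ) : ℝ) / (m + 1 : ℕ)| ≤ 4 * C / (m + 1 : ℕ) :=
  abs_div_sub_div_le (by positivity) hm (hG.abs_covariance_last_sub_le (by lia) (by lia))
    hG.abs_variance_last_sub_le (by positivity) (Nat.cast_le.2 (by lia))

lemma abs_covarianceMatrix_regressionResidual_sub_le (hm : 2 * C ≤ (m + 1 : ℕ)) (i j : Fin m) :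
    |covarianceMatrix (regressionResidual (fun i : Fin m ↦ G (i + 1)) (G (m + 1)) P) P i j
      - (((min (i + 1) (j + 1) : ℕ) : ℝ) - ((i + 1 : ℕ) : ℝ) * ((j + 1 : ℕ) : ℝ) / (m + 1 : ℕ))|
      ≤ 8 * C := by
  have hlaw := hG.hasGaussianLaw_prodMk
  have := hlaw.isProbabilityMeasure
  rw [covarianceMatrix_regressionResidual_apply (fun i ↦ (hlaw.fst.eval i).memLp_two)
    hlaw.snd.memLp_two]
  exact abs_sub_mul_div_sub_le (by positivity) hm
    (hG.abs_covariance_sub_min_le _ _ (by lia) (by lia) (by lia) (by lia))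
    (hG.abs_covariance_last_sub_le (by lia) (by lia))
    (hG.abs_covariance_last_sub_le (by lia) (by lia)) hG.abs_variance_last_sub_le
    (by positivity) (Nat.cast_le.2 (by lia)) (by positivity) (Nat.cast_le.2 (by lia))

end IsNearGaussianWalk

end NearGaussianWalk

section CenteredGaussianCov

variable {Ω : Type} [MeasurableSpace Ω] {P : Measure Ω} {G : ℕ → Ω → ℝ} {n : ℕ} {R : ℕ → ℕ → ℝ}

namespace IsCenteredGaussianCov

variable (hG : IsCenteredGaussianCov P G n R)
include hG

lemma map_eq_gaussianReal {i : ℕ} (hi : 1 ≤ i ∧ i ≤ n) :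
    P.map (G i) = gaussianReal 0 (R i i).toNNReal := by
  simpa using hG 1 (fun _ ↦ i) (fun _ ↦ 1) fun _ ↦ hi

lemma map_add_eq_gaussianReal {i j : ℕ} (hi : 1 ≤ i ∧ i ≤ n) (hj : 1 ≤ j ∧ j ≤ n) :
    P.map (G i + G j) = gaussianReal 0 (R i i + R i j + (R j i + R j j)).toNNReal := by
  have h := hG 2 ![i, j] ![1, 1] (by simp [Fin.forall_fin_two, hi, hj])
  simpa [Fin.sum_univ_two, ← Pi.add_def] using h

lemma aemeasurable {i : ℕ} (hi : 1 ≤ i ∧ i ≤ n) : AEMeasurable (G i) P :=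
  .of_map_ne_zero <| by
    rw [hG.map_eq_gaussianReal hi]
    exact IsProbabilityMeasure.ne_zero _

lemma hasGaussianLaw_apply {i : ℕ} (hi : 1 ≤ i ∧ i ≤ n) : HasGaussianLaw (G i) P where
  isGaussian_map := by
    rw [hG.map_eq_gaussianReal hi]
    infer_instance

lemma integral_eq_zero {i : ℕ} (hi : 1 ≤ i ∧ i ≤ n) : P[G i] = 0 := by
  have h := integral_map (hG.aemeasurable hi) (f := id) (by fun_prop)
  rw [hG.map_eq_gaussianReal hi] at h
  simpa [integral_id_gaussianReal] using h.symm

lemma variance_eq {i : ℕ} (hi : 1 ≤ i ∧ i ≤ n) : Var[G i; P] = max (R i i) 0 := by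
  rw [← variance_id_map (hG.aemeasurable hi), hG.map_eq_gaussianReal hi, variance_id_gaussianReal,
    Real.coe_toNNReal']

lemma variance_add_eq {i j : ℕ} (hi : 1 ≤ i ∧ i ≤ n) (hj : 1 ≤ j ∧ j ≤ n) :
    Var[G i + G j; P] = max (R i i + R i j + (R j i + R j j)) 0 := by
  rw [← variance_id_map ((hG.aemeasurable hi).add (hG.aemeasurable hj)),
    hG.map_add_eq_gaussianReal hi hj, variance_id_gaussianReal, Real.coe_toNNReal']

lemma hasGaussianLaw : HasGaussianLaw (fun ω (i : Fin n) ↦ G (i + 1) ω) P where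
  isGaussian_map := isGaussian_of_map_eq_gaussianReal fun L ↦ by
    refine ⟨0, _, Eq.trans ?_
      (hG n (fun i ↦ i + 1) (fun i ↦ L fun j ↦ if i = j then 1 else 0) fun i ↦ by lia)⟩
    have hmeas : AEMeasurable (fun ω (i : Fin n) ↦ G (i + 1) ω) P :=
      aemeasurable_pi_lambda _ fun i ↦ hG.aemeasurable (by lia)
    rw [AEMeasurable.map_map_of_aemeasurable (by fun_prop) hmeas]
    congr 1
    ext ω
    simpa [mul_comm] using L.toLinearMap.pi_apply_eq_sum_univ fun i : Fin n ↦ G (i + 1) ω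

variable {C : ℝ} (hR : ∀ i j, 1 ≤ i → i ≤ n → 1 ≤ j → j ≤ n → |R i j - ((min i j : ℕ) : ℝ)| ≤ C)
include hR

lemma abs_variance_sub_le {i : ℕ} (hi : 1 ≤ i ∧ i ≤ n) : |Var[G i; P] - i| ≤ C := by
  have hmax := abs_max_sub_max_le_abs (R i i) i 0
  rw [max_eq_left i.cast_nonneg, ← hG.variance_eq hi] at hmax
  simpa using hmax.trans (by simpa using hR i i hi.1 hi.2 hi.1 hi.2)

lemma abs_variance_add_sub_le {i j : ℕ} (hi : 1 ≤ i ∧ i ≤ n) (hj : 1 ≤ j ∧ j ≤ n) :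
    |Var[G i + G j; P] - (i + j + 2 * (min i j : ℕ))| ≤ 4 * C := by
  have hmax := abs_max_sub_max_le_abs (R i i + R i j + (R j i + R j j))
    (i + j + 2 * (min i j : ℕ)) 0
  rw [max_eq_left (show (0 : ℝ) ≤ i + j + 2 * (min i j : ℕ) by positivity),
    ← hG.variance_add_eq hi hj] at hmax
  refine hmax.trans ?_
  have hii := hR i i hi.1 hi.2 hi.1 hi.2
  have hij := hR i j hi.1 hi.2 hj.1 hj.2
  have hji := hR j i hj.1 hj.2 hi.1 hi.2
  have hjj := hR j j hj.1 hj.2 hj.1 hj.2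
  rw [min_comm j i] at hji
  rw [min_self] at hii hjj
  rw [abs_le] at hii hij hji hjj ⊢
  constructor <;> linarith

/-- `R` need not be symmetric or positive semidefinite, and negative values of the quadratic form
are truncated by `toNNReal`; so covariances are recovered by polarization, at the cost of the
factor `3`. -/
theorem isNearGaussianWalk : IsNearGaussianWalk P G n (3 * C) where
  hasGaussianLaw := hG.hasGaussianLaw
  integral_eq_zero i hi hin := hG.integral_eq_zero ⟨hi, hin⟩
  abs_covariance_sub_min_le i j hi hin hj hjn := by
    have hGi := hG.hasGaussianLaw_apply ⟨hi, hin⟩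
    have hGj := hG.hasGaussianLaw_apply ⟨hj, hjn⟩
    have := hGi.isProbabilityMeasure
    have hpolar := variance_add hGi.memLp_two hGj.memLp_two
    have hsum := hG.abs_variance_add_sub_le hR ⟨hi, hin⟩ ⟨hj, hjn⟩
    have hvar_i := hG.abs_variance_sub_le hR ⟨hi, hin⟩
    have hvar_j := hG.abs_variance_sub_le hR ⟨hj, hjn⟩
    rw [abs_le] at hsum hvar_i hvar_j ⊢
    constructor <;> linarith

end IsCenteredGaussianCov

end CenteredGaussianCov

section Barrier

lemma barrierEvent_succ {Ω : Type} (G : ℕ → Ω → ℝ) (m : ℕ) (t : ℝ) (h : ℕ → ℝ) :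
    barrierEvent G (m + 1) t h
      = {ω | ∀ i : Fin m, G (i + 1) ω ≤ h (i + 1)} ∩ G (m + 1) ⁻¹' Set.Icc t (t + 1) := by
  ext ω
  refine and_congr_left fun _ ↦ ⟨fun H i ↦ H _ (by lia) (by lia), fun H i hi him ↦ ?_⟩
  simpa [Nat.sub_add_cancel hi] using H ⟨i - 1, by lia⟩

lemma abs_sub_le_two_mul {a b x c : ℝ} (ha : |a - x| ≤ c) (hb : |b - x| ≤ c) :
    |a - b| ≤ 2 * c := by
  rw [abs_le] at ha hb ⊢
  constructor <;> linarith

lemma sub_div_mul_sub_one_le {v w N s T C : ℝ} (hN : 0 < N) (hv : N / 2 ≤ v) (hw : N / 2 ≤ w)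
    (hvw : |v - w| ≤ 2 * C) (hs : |s| ≤ T) :
    (v - w) / (2 * v) * (s ^ 2 / w - 1) ≤ 2 * C / N * (2 * T ^ 2 / N + 1) := by
  have hC : 0 ≤ 2 * C := (abs_nonneg _).trans hvw
  have hquot : |(v - w) / (2 * v)| ≤ 2 * C / N := by
    rw [abs_div, abs_of_pos (by linarith : 0 < 2 * v)]
    exact div_le_div₀ hC hvw hN (by linarith)
  have hsq : |s ^ 2 / w - 1| ≤ 2 * T ^ 2 / N + 1 := by
    have hdiv : s ^ 2 / w ≤ 2 * T ^ 2 / N :=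
      calc s ^ 2 / w ≤ T ^ 2 / (N / 2) :=
            div_le_div₀ (sq_nonneg T) (sq_le_sq.2 (hs.trans (le_abs_self T))) (by positivity) hw
        _ = 2 * T ^ 2 / N := by field_simp
    have hnonneg : 0 ≤ s ^ 2 / w := div_nonneg (sq_nonneg s) (by linarith)
    rw [abs_le]
    constructor <;> linarith
  calc (v - w) / (2 * v) * (s ^ 2 / w - 1) ≤ |(v - w) / (2 * v)| * |s ^ 2 / w - 1| :=
        (le_abs_self _).trans (abs_mul _ _).le
    _ ≤ 2 * C / N * (2 * T ^ 2 / N + 1) := mul_le_mul hquot hsq (abs_nonneg _) (by positivity)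

namespace IsNearGaussianWalk

variable {Ω Ω' : Type} [MeasurableSpace Ω] [MeasurableSpace Ω'] {P : Measure Ω} {P' : Measure Ω'}
  {G : ℕ → Ω → ℝ} {G' : ℕ → Ω' → ℝ} {m : ℕ} {C L t T : ℝ}

lemma regressionCoeff_sub_mul_le (hG : IsNearGaussianWalk P G (m + 1) C)
    (hG' : IsNearGaussianWalk P' G' (m + 1) C) (hC : 2 * C ≤ (m + 1 : ℕ)) {s : ℝ}
    (hs : |s| ≤ (m + 1 : ℕ)) (i : Fin m) :
    (regressionCoeff (fun i : Fin m ↦ G' (i + 1)) (G' (m + 1)) P' i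
      - regressionCoeff (fun i : Fin m ↦ G (i + 1)) (G (m + 1)) P i) * s ≤ 8 * C := by
  have hdiff := abs_sub_le_two_mul (hG'.abs_regressionCoeff_sub_le hC i)
    (hG.abs_regressionCoeff_sub_le hC i)
  calc _ ≤ 2 * (4 * C / (m + 1 : ℕ)) * (m + 1 : ℕ) :=
        (le_abs_self _).trans <| (abs_mul _ _).trans_le <|
          mul_le_mul hdiff hs (abs_nonneg _) ((abs_nonneg _).trans hdiff)
    _ = 8 * C := by field_simp; ring

theorem measure_barrierEvent_le (hG : IsNearGaussianWalk P G (m + 1) C)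
    (hG' : IsNearGaussianWalk P' G' (m + 1) C) (hC : 2 * C ≤ (m + 1 : ℕ)) (hL : 24 * C ≤ L)
    (ht : |t| + 1 ≤ T) (hT : T ≤ (m + 1 : ℕ)) (h : ℕ → ℝ) :
    P (barrierEvent G (m + 1) t h)
      ≤ ENNReal.ofReal (Real.exp (2 * C / (m + 1 : ℕ) * (2 * T ^ 2 / (m + 1 : ℕ) + 1)))
          * P' (barrierEvent G' (m + 1) t fun i ↦ h i + L)
        + 4 * m * ENNReal.ofReal (Real.exp (-L ^ 2 / (576 * C))) := by
  have hN : (0 : ℝ) < (m + 1 : ℕ) := by positivity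
  have hC0 : 0 ≤ C := (abs_nonneg _).trans hG.abs_variance_last_sub_le
  have hvar := hG.half_le_variance_last hC
  have hvar' := hG'.half_le_variance_last hC
  have hIcc : ∀ s ∈ Set.Icc t (t + 1), |s| ≤ T := fun s hs ↦ by
    rcases hs with ⟨hts, hst⟩
    exact abs_le.2 ⟨by linarith [neg_abs_le t], by linarith [le_abs_self t]⟩
  have hcov := fun i j ↦
    (abs_sub_le_two_mul (hG.abs_covarianceMatrix_regressionResidual_sub_le hC i j)
      (hG'.abs_covarianceMatrix_regressionResidual_sub_le hC i j)).trans_eq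
      (show 2 * (8 * C) = 16 * C by ring)
  have hslope : ∀ i, ∀ s ∈ Set.Icc t (t + 1), _ ≤ L / 3 := fun i s hs ↦
    (hG.regressionCoeff_sub_mul_le hG' hC ((hIcc s hs).trans hT) i).trans (by linarith)
  have hdensity := fun s hs ↦ sub_div_mul_sub_one_le hN hvar hvar'
    (abs_sub_le_two_mul hG.abs_variance_last_sub_le hG'.abs_variance_last_sub_le) (hIcc s hs)
  have hbound := measure_setOf_forall_le_inter_preimage_le hG.hasGaussianLaw_prodMk
    (fun i ↦ hG.integral_eq_zero _ (by lia) (by lia)) (hG.integral_eq_zero _ (by lia) le_rfl)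
    hG'.hasGaussianLaw_prodMk (fun i ↦ hG'.integral_eq_zero _ (by lia) (by lia))
    (hG'.integral_eq_zero _ (by lia) le_rfl) (by linarith) (by linarith) measurableSet_Icc
    (by positivity) (by linarith : 0 ≤ L / 3) hcov hslope hdensity fun i : Fin m ↦ h (i + 1)
  convert hbound using 2
  · exact barrierEvent_succ ..
  · rw [barrierEvent_succ, show 2 * (L / 3) + L / 3 = L by ring]
  · rw [Fintype.card_fin]
    congr 3
    ring

theorem toReal_measure_barrierEvent_le (hG : IsNearGaussianWalk P G (m + 1) C)
    (hG' : IsNearGaussianWalk P' G' (m + 1) C) (hC : 2 * C ≤ (m + 1 : ℕ)) (hL : 24 * C ≤ L)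
    (ht : |t| + 1 ≤ T) (hT : T ≤ (m + 1 : ℕ)) (h : ℕ → ℝ) :
    (P (barrierEvent G (m + 1) t h)).toReal
      ≤ Real.exp (2 * C / (m + 1 : ℕ) * (2 * T ^ 2 / (m + 1 : ℕ) + 1))
          * (P' (barrierEvent G' (m + 1) t fun i ↦ h i + L)).toReal
        + 4 * m * Real.exp (-L ^ 2 / (576 * C)) := by
  have := hG'.hasGaussianLaw.isProbabilityMeasure
  have hmain : ENNReal.ofReal (Real.exp (2 * C / (m + 1 : ℕ) * (2 * T ^ 2 / (m + 1 : ℕ) + 1)))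
      * P' (barrierEvent G' (m + 1) t fun i ↦ h i + L) ≠ ⊤ :=
    ENNReal.mul_ne_top ENNReal.ofReal_ne_top (measure_ne_top _ _)
  have herror : 4 * m * ENNReal.ofReal (Real.exp (-L ^ 2 / (576 * C))) ≠ ⊤ :=
    ENNReal.mul_ne_top (by finiteness) ENNReal.ofReal_ne_top
  have hle := ENNReal.toReal_mono (ENNReal.add_ne_top.2 ⟨hmain, herror⟩)
    (hG.measure_barrierEvent_le hG' hC hL ht hT h)
  rw [ENNReal.toReal_add hmain herror] at hle
  simpa only [ENNReal.toReal_mul, ENNReal.toReal_ofReal (Real.exp_nonneg _),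
    ENNReal.toReal_ofNat, ENNReal.toReal_natCast] using hle

end IsNearGaussianWalk

end Barrier

section Asymptotics

open Filter Topology Asymptotics

lemma eventually_mul_exp_log_rpow_le {κ ε : ℝ} (hκ : 0 < κ) (hε : 0 < ε) :
    ∀ᶠ x : ℝ in atTop, x * Real.exp (-(κ * (Real.log x ^ ((3 : ℝ) / 4)) ^ 2))
      ≤ Real.exp (-(Real.log x ^ ((3 : ℝ) / 2 - ε))) := by
  have hlog := Real.tendsto_log_atTop
  have hpow := hlog.eventually ((tendsto_rpow_neg_atTop hε).eventually_le_const (half_pos hκ))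
  have hlin := hlog.eventually
    ((tendsto_rpow_neg_atTop (y := 1 / 2) (by norm_num)).eventually_le_const (half_pos hκ))
  filter_upwards [hpow, hlin, hlog.eventually_gt_atTop 0, eventually_gt_atTop 0]
    with x hpow hlin hy hx
  nth_rw 1 [← Real.exp_log hx]
  rw [← Real.exp_add, Real.exp_le_exp]
  set y := Real.log x
  have hsq : (y ^ ((3 : ℝ) / 4)) ^ 2 = y ^ ((3 : ℝ) / 2) := by
    rw [← Real.rpow_mul_natCast hy.le]
    norm_num
  have hlin' : y ≤ y ^ ((3 : ℝ) / 2) * (κ / 2) :=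
    calc y = y ^ ((3 : ℝ) / 2) * y ^ (-(1 / 2) : ℝ) := by
          rw [← Real.rpow_add hy]
          norm_num
      _ ≤ y ^ ((3 : ℝ) / 2) * (κ / 2) := by gcongr
  have hpow' : y ^ ((3 : ℝ) / 2 - ε) ≤ y ^ ((3 : ℝ) / 2) * (κ / 2) :=
    calc y ^ ((3 : ℝ) / 2 - ε) = y ^ ((3 : ℝ) / 2) * y ^ (-ε) := by
          rw [← Real.rpow_add hy, sub_eq_add_neg]
      _ ≤ y ^ ((3 : ℝ) / 2) * (κ / 2) := by gcongr
  rw [hsq]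
  linarith

lemma tendsto_exp_mul_sq_div_add_one {c : ℝ} {T : ℕ → ℝ}
    (hT : T =o[atTop] fun n ↦ (n : ℝ)) :
    Tendsto (fun n : ℕ ↦ Real.exp (c / n * (2 * T n ^ 2 / n + 1))) atTop (𝓝 1) := by
  have hexp : Tendsto (fun n : ℕ ↦ 2 * c * (T n / n) ^ 2 + c / n) atTop (𝓝 0) := by
    simpa using ((hT.tendsto_div_nhds_zero.pow 2).const_mul (2 * c)).add
      (tendsto_const_div_atTop_nhds_zero_nat c)
  refine (Real.exp_zero ▸ (Real.continuous_exp.tendsto 0).comp hexp).congr fun n ↦ ?_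
  simp only [Function.comp_apply]
  congr 1
  ring

lemma one_sub_mul_sub_le {p q e ε : ℝ} (hp : 0 ≤ p) (hq : 0 ≤ q) (he : 0 ≤ e) (hε : 0 ≤ ε)
    (h : q ≤ (1 + ε) * p + e) : (1 - ε) * q - e ≤ p := by
  rcases le_total 1 ε with hε1 | hε1
  · nlinarith [mul_nonneg (sub_nonneg.2 hε1) hq]
  · nlinarith [mul_le_mul_of_nonneg_left h (sub_nonneg.2 hε1), mul_nonneg hε he,
      mul_nonneg (mul_nonneg hε hε) hp]

theorem eventually_measure_barrierEvent_le {C ε : ℝ} (hC : 0 < C) (hε : 0 < ε) {τ : ℕ → ℝ}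
    (hτ : τ =o[atTop] fun n ↦ (n : ℝ)) :
    ∀ᶠ n : ℕ in atTop, ∀ (Ω Ω' : Type) [MeasurableSpace Ω] [MeasurableSpace Ω'] (P : Measure Ω)
      (P' : Measure Ω') (G : ℕ → Ω → ℝ) (G' : ℕ → Ω' → ℝ),
      IsNearGaussianWalk P G n C → IsNearGaussianWalk P' G' n C →
      ∀ (h : ℕ → ℝ) (t : ℝ), |t| ≤ τ n →
        (P (barrierEvent G n t h)).toReal
          ≤ (1 + ε) * (P' (barrierEvent G' n t
              (fun i ↦ h i + Real.log n ^ ((3 : ℝ) / 4)))).toReal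
            + 4 * Real.exp (-(Real.log n ^ ((3 : ℝ) / 2 - ε))) := by
  have hcast := tendsto_natCast_atTop_atTop (R := ℝ)
  have hT : (fun n ↦ τ n + 1) =o[atTop] fun n : ℕ ↦ (n : ℝ) :=
    hτ.add ((isLittleO_const_left_of_ne one_ne_zero).2
      (tendsto_norm_atTop_atTop.comp hcast))
  have hshift : ∀ᶠ n : ℕ in atTop, 24 * C ≤ Real.log n ^ ((3 : ℝ) / 4) :=
    ((tendsto_rpow_atTop (by norm_num : (0 : ℝ) < 3 / 4)).comp
      (Real.tendsto_log_atTop.comp hcast)).eventually_ge_atTop (24 * C)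
  have hratio := (tendsto_exp_mul_sq_div_add_one (c := 2 * C) hT).eventually_le_const
    (lt_add_of_pos_right 1 hε)
  have herr := hcast.eventually
    (eventually_mul_exp_log_rpow_le (κ := (576 * C)⁻¹) (by positivity) hε)
  filter_upwards [herr, hratio, hshift, hT.bound one_pos, hcast.eventually_ge_atTop (2 * C),
    eventually_ge_atTop 1] with n herr hratio hL hTn hCn hn
  intro Ω Ω' _ _ P P' G G' hG hG' h t ht
  obtain ⟨m, rfl⟩ := Nat.exists_eq_add_of_le' hn
  have hTm : τ (m + 1) + 1 ≤ (m + 1 : ℕ) :=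
    calc τ (m + 1) + 1 ≤ 1 * ‖((m + 1 : ℕ) : ℝ)‖ := (le_abs_self _).trans hTn
      _ = (m + 1 : ℕ) := by rw [one_mul, Real.norm_natCast]
  refine (hG.toReal_measure_barrierEvent_le hG' hCn hL (by linarith) hTm h).trans ?_
  refine add_le_add (mul_le_mul_of_nonneg_right hratio ENNReal.toReal_nonneg) ?_
  rw [mul_assoc]
  refine mul_le_mul_of_nonneg_left (le_trans ?_ herr) (by norm_num)
  rw [neg_div, div_eq_inv_mul]
  gcongr
  simp

theorem stmt_18_general {C ε : ℝ} (hC : 0 < C) (hε : 0 < ε) {τ : ℕ → ℝ}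
    (hτ : τ =o[atTop] fun n ↦ (n : ℝ)) :
    ∃ (C₁ : ℝ) (n₁ : ℕ), ∀ n : ℕ, n₁ ≤ n → ∀ (Ω Ω' : Type) [MeasurableSpace Ω]
      [MeasurableSpace Ω'] (P : Measure Ω) (P' : Measure Ω') (G : ℕ → Ω → ℝ) (G' : ℕ → Ω' → ℝ),
      IsNearGaussianWalk P G n C → IsNearGaussianWalk P' G' n C →
      ∀ (h : ℕ → ℝ) (t : ℝ), |t| ≤ τ n →
        (1 - ε) * (P' (barrierEvent G' n t
              (fun i ↦ h i - Real.log n ^ ((3 : ℝ) / 4)))).toReal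
            - C₁ * Real.exp (-(Real.log n ^ ((3 : ℝ) / 2 - ε)))
          ≤ (P (barrierEvent G n t h)).toReal ∧
        (P (barrierEvent G n t h)).toReal
          ≤ (1 + ε) * (P' (barrierEvent G' n t
              (fun i ↦ h i + Real.log n ^ ((3 : ℝ) / 4)))).toReal
            + C₁ * Real.exp (-(Real.log n ^ ((3 : ℝ) / 2 - ε))) := by
  obtain ⟨n₁, hn₁⟩ := eventually_atTop.1 (eventually_measure_barrierEvent_le hC hε hτ)
  refine ⟨4, n₁, fun n hn Ω Ω' _ _ P P' G G' hG hG' h t ht ↦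
    ⟨?_, hn₁ n hn _ _ P P' G G' hG hG' h t ht⟩⟩
  have hswap := hn₁ n hn _ _ P' P G' G hG' hG (fun i ↦ h i - Real.log n ^ ((3 : ℝ) / 4)) t ht
  simp only [sub_add_cancel] at hswap
  exact one_sub_mul_sub_le ENNReal.toReal_nonneg ENNReal.toReal_nonneg (by positivity) hε.le hswap

lemma isLittleO_natCast_rpow {a : ℝ} (ha : a < 1) :
    (fun n : ℕ ↦ (n : ℝ) ^ a) =o[atTop] fun n ↦ (n : ℝ) := by
  have hquot := (tendsto_rpow_neg_atTop (sub_pos.2 ha)).comp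
    (tendsto_natCast_atTop_atTop (R := ℝ))
  refine isLittleO_of_tendsto' ?_ (hquot.congr' ?_)
  · filter_upwards [eventually_gt_atTop 0] with n hn hzero
    exact absurd (Nat.cast_eq_zero.1 hzero) hn.ne'
  · filter_upwards [eventually_gt_atTop 0] with n hn
    rw [Function.comp_apply, neg_sub, Real.rpow_sub_one (Nat.cast_ne_zero.2 hn.ne')]

end Asymptotics

/-- Barrier probability comparison between a centered Gaussian process whose covariance
is within `C₀` of `min(i,j)` and the Gaussian random walk `Y` (covariance `min(i,j)`):
`(1−ε) p_{B,Y}(n,t,h−(log n)^{3/4}) − C₁ e^{−(log n)^{3/2−ε}} ≤ p_{B,G}(n,t,h)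
  ≤ (1+ε) p_{B,Y}(n,t,h+(log n)^{3/4}) + C₁ e^{−(log n)^{3/2−ε}}`. -/
theorem stmt_18 (C₀ ε : ℝ) (hC₀ : 0 < C₀) (hε : 0 < ε) :
    ∃ (C₁ : ℝ) (n₁ : ℕ), ∀ n : ℕ, n₁ ≤ n →
      ∀ (Ω : Type) (_ : MeasurableSpace Ω) (P : Measure Ω), IsProbabilityMeasure P →
      ∀ (G : ℕ → Ω → ℝ) (Rcov : ℕ → ℕ → ℝ),
        IsCenteredGaussianCov P G n Rcov →
        (∀ i j, 1 ≤ i → i ≤ n → 1 ≤ j → j ≤ n →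
          |Rcov i j - ((min i j : ℕ) : ℝ)| ≤ C₀) →
      ∀ (Ω' : Type) (_ : MeasurableSpace Ω') (P' : Measure Ω'), IsProbabilityMeasure P' →
      ∀ Y : ℕ → Ω' → ℝ,
        IsCenteredGaussianCov P' Y n (fun i j => ((min i j : ℕ) : ℝ)) →
      ∀ (h : ℕ → ℝ) (t : ℝ), |t| < (n : ℝ) ^ ((1 : ℝ) / 4) →
        (1 - ε) * (P' (barrierEvent Y n t
              (fun i => h i - Real.log n ^ ((3 : ℝ) / 4)))).toReal
            - C₁ * Real.exp (-(Real.log n ^ ((3 : ℝ) / 2 - ε)))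
          ≤ (P (barrierEvent G n t h)).toReal ∧
        (P (barrierEvent G n t h)).toReal
          ≤ (1 + ε) * (P' (barrierEvent Y n t
              (fun i => h i + Real.log n ^ ((3 : ℝ) / 4)))).toReal
            + C₁ * Real.exp (-(Real.log n ^ ((3 : ℝ) / 2 - ε))) := by
  obtain ⟨C₁, n₁, hn₁⟩ := stmt_18_general (C := 3 * C₀) (by positivity) hε
    (isLittleO_natCast_rpow (a := 1 / 4) (by norm_num))
  refine ⟨C₁, n₁, fun n hn Ω _ P _ G R hG hR Ω' _ P' _ Y hY h t ht ↦ ?_⟩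
  have hY' := hY.isNearGaussianWalk (C := C₀) (by simp [hC₀.le])
  exact hn₁ n hn Ω Ω' P P' G Y (hG.isNearGaussianWalk hR) hY' h t ht.le

end
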